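/- arXiv:2004.01218 — 4 statements merged into one kernel-verified Lean document; each statement's English description precedes it below -/
import Mathlib

section
/- Let G be a segregated graph with vertex set V. Let B^{nt}(G) be the collection of non-trivial blocks of G, and let D(G) be the collection of districts of the induced subgraph of G on the vertices lying in no non-trivial block. Then the members of B^{nt}(G) together with the members of D(G) are pairwise disjoint nonempty sets whose union is V; that is, they partition V. In particular, in a segregated graph no vertex of a non-trivial block has an incident bidirected edge. -/
/-- A mixed graph on vertex type `V`: directed (`dir`), undirected (`undir`),
and bidirected (`bidir`) edge relations. -/
structure MixedGraph (V : Type*) where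
  dir : V → V → Prop
  undir : V → V → Prop
  bidir : V → V → Prop

namespace MixedGraph

variable {V : Type*}

/-- The three edge relations are irreflexive, and `undir`, `bidir` are symmetric. -/
def IsMixed (G : MixedGraph V) : Prop :=
  (∀ v, ¬ G.dir v v) ∧ (∀ v, ¬ G.undir v v) ∧ (∀ v, ¬ G.bidir v v) ∧
  (∀ u v, G.undir u v → G.undir v u) ∧ (∀ u v, G.bidir u v → G.bidir v u)

/-- One step of a partially directed path: a directed edge (oriented along the
path) or an undirected edge. -/
def pdStep (G : MixedGraph V) (u v : V) : Prop := G.dir u v ∨ G.undir u v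

/-- A partially directed cycle: `k ≥ 2` distinct vertices arranged cyclically where
each consecutive pair (with wraparound) is joined by a directed edge oriented along
the cycle or by an undirected edge, and at least one of these edges is directed. -/
def HasPDCycle (G : MixedGraph V) : Prop :=
  ∃ (k : ℕ) (f : Fin (k + 2) → V), Function.Injective f ∧
    (∀ i, G.pdStep (f i) (f (i + 1))) ∧ (∃ i, G.dir (f i) (f (i + 1)))

/-- A segregated graph: a mixed graph with no partially directed cycle in which
no vertex has both an incident undirected edge and an incident bidirected edge. -/
def IsSegregated (G : MixedGraph V) : Prop :=
  G.IsMixed ∧ ¬ G.HasPDCycle ∧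
    ∀ v, ¬ ((∃ u, G.undir v u) ∧ (∃ u, G.bidir v u))

/-- The directed edges present after step (i) of the intervention procedure:
for `y ∈ 𝐀` exactly the edges `Z_y → y`; for `y ∉ 𝐀`, the old directed edges into `y`
together with the reorientation `x → y` of old undirected edges `x − y` with `x ∈ 𝐀`. -/
def dirAux (G : MixedGraph V) (A : Set V) (Z : V → Set V) (x y : V) : Prop :=
  (y ∈ A ∧ x ∈ Z y) ∨ (y ∉ A ∧ (G.dir x y ∨ (G.undir x y ∧ x ∈ A)))

/-- The intervened graph `G_{f𝐀}`: step (i) as encoded by `dirAux` (undirected and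
bidirected edges incident to `𝐀` are removed/reoriented), followed by step (ii),
which replaces each pair of mutual directed edges by a single undirected edge. -/
def intervene (G : MixedGraph V) (A : Set V) (Z : V → Set V) : MixedGraph V where
  dir x y := G.dirAux A Z x y ∧ ¬ G.dirAux A Z y x
  undir x y := (G.undir x y ∧ x ∉ A ∧ y ∉ A) ∨ (G.dirAux A Z x y ∧ G.dirAux A Z y x)
  bidir x y := G.bidir x y ∧ x ∉ A ∧ y ∉ A

/-- The exterior of `x`: vertices reachable from `x` by a partially directed path. -/
def ext (G : MixedGraph V) (x : V) : Set V := {w | Relation.ReflTransGen G.pdStep x w}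

/-- Vertices joined to `x` by a path of undirected edges (including `x` itself). -/
def undirConn (G : MixedGraph V) (x : V) : Set V := {w | Relation.ReflTransGen G.undir x w}

/-- The strict exterior of `x`: the exterior with `x` and everything joined to `x`
by a path of undirected edges removed. -/
def strictExt (G : MixedGraph V) (x : V) : Set V := G.ext x \ G.undirConn x

/-- The intervention `(𝐀, (Z_A))` is segregation preserving: (a) each `Z_A` avoids the
strict exterior of `A` in `G`; (b) if distinct `A_i, A_j ∈ 𝐀` each lie on a partially
directed path from the other in `G_{f𝐀}`, then `A_i ∈ Z_{A_j}` and `A_j ∈ Z_{A_i}`. -/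
def SegregationPreserving (G : MixedGraph V) (A : Set V) (Z : V → Set V) : Prop :=
  (∀ a ∈ A, Z a ⊆ (G.strictExt a)ᶜ) ∧
  ∀ ai ∈ A, ∀ aj ∈ A, ai ≠ aj →
    aj ∈ (G.intervene A Z).ext ai → ai ∈ (G.intervene A Z).ext aj →
    ai ∈ Z aj ∧ aj ∈ Z ai

/-- The induced subgraph `G_S`: keeps exactly those edges with both endpoints in `S`. -/
def induce (G : MixedGraph V) (S : Set V) : MixedGraph V where
  dir x y := G.dir x y ∧ x ∈ S ∧ y ∈ S
  undir x y := G.undir x y ∧ x ∈ S ∧ y ∈ S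
  bidir x y := G.bidir x y ∧ x ∈ S ∧ y ∈ S

/-- The block of `v`: the connected component of `v` under the undirected-edge relation. -/
def block (G : MixedGraph V) (v : V) : Set V := {w | Relation.ReflTransGen G.undir v w}

/-- The district of `v`: the connected component of `v` under the bidirected-edge relation. -/
def district (G : MixedGraph V) (v : V) : Set V := {w | Relation.ReflTransGen G.bidir v w}

/-- The non-trivial blocks of `G`: blocks with at least two vertices. -/
def ntBlocks (G : MixedGraph V) : Set (Set V) :=
  {B | (∃ v, B = G.block v) ∧ B.Nontrivial}

/-- The vertices lying in some non-trivial block of `G`. -/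
def blockVerts (G : MixedGraph V) : Set V := ⋃₀ G.ntBlocks

/-- The districts of the induced subgraph of `G` on the vertices lying in no
non-trivial block. -/
def restDistricts (G : MixedGraph V) : Set (Set V) :=
  {D | ∃ v ∈ G.blockVertsᶜ, D = (G.induce G.blockVertsᶜ).district v}

/-- The anterior of `Y`: `Y` together with all vertices having a partially directed
path into some member of `Y`. -/
def anterior (G : MixedGraph V) (Y : Set V) : Set V :=
  {x | ∃ y ∈ Y, Relation.ReflTransGen G.pdStep x y}

end MixedGraph

/-!
The connected components of a symmetric relation are pairwise disjoint. The non-trivial blocks cover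
`G.blockVerts` by definition, and every district of the subgraph induced on the complement stays in
that complement, so the two families cover complementary sets. A vertex of a non-trivial block is
joined to another vertex by an undirected path; the first edge of that path excludes incident
bidirected edges.
-/

theorem pairwiseDisjoint_range_reflTransGen {α : Type*} (r : α → α → Prop) [Std.Symm r] :
    (Set.range fun a ↦ {b | Relation.ReflTransGen r a b}).PairwiseDisjoint id := by
  rintro _ ⟨a, rfl⟩ _ ⟨b, rfl⟩ hne
  refine Set.disjoint_left.2 fun x (hax : Relation.ReflTransGen r a x)
    (hbx : Relation.ReflTransGen r b x) ↦ hne ?_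
  have hab : Relation.ReflTransGen r a b := hax.trans (symm hbx)
  exact Set.ext fun _ ↦ ⟨(symm hab).trans, hab.trans⟩

namespace MixedGraph

variable {V : Type*} (G : MixedGraph V)

instance symm_induce_bidir (S : Set V) [Std.Symm G.bidir] : Std.Symm (G.induce S).bidir where
  symm _ _ := fun ⟨huv, hu, hv⟩ ↦ ⟨symm huv, hv, hu⟩

theorem district_induce_subset {S : Set V} {v : V} (hv : v ∈ S) :
    (G.induce S).district v ⊆ S := by
  intro w hw
  obtain rfl | ⟨_, -, -, -, hwS⟩ := Relation.ReflTransGen.cases_tail hw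
  · exact hv
  · exact hwS

theorem sUnion_restDistricts : ⋃₀ G.restDistricts = G.blockVertsᶜ := by
  refine Set.Subset.antisymm (Set.sUnion_subset ?_) fun v hv ↦ ⟨_, ⟨v, hv, rfl⟩, .refl⟩
  rintro _ ⟨v, hv, rfl⟩
  exact G.district_induce_subset hv

theorem sUnion_ntBlocks_union_restDistricts :
    ⋃₀ (G.ntBlocks ∪ G.restDistricts) = Set.univ := by
  rw [Set.sUnion_union, sUnion_restDistricts]
  exact Set.union_compl_self G.blockVerts

theorem nonempty_of_mem_ntBlocks_union_restDistricts {S : Set V}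
    (hS : S ∈ G.ntBlocks ∪ G.restDistricts) : S.Nonempty := by
  obtain ⟨-, hnontrivial⟩ | ⟨v, -, rfl⟩ := hS
  · exact hnontrivial.nonempty
  · exact ⟨v, .refl⟩

theorem disjoint_of_mem_ntBlocks_of_mem_restDistricts {B D : Set V} (hB : B ∈ G.ntBlocks)
    (hD : D ∈ G.restDistricts) : Disjoint B D :=
  disjoint_compl_right.mono (Set.subset_sUnion_of_mem hB)
    (G.sUnion_restDistricts ▸ Set.subset_sUnion_of_mem hD)

theorem pairwiseDisjoint_ntBlocks [Std.Symm G.undir] : G.ntBlocks.PairwiseDisjoint id :=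
  (pairwiseDisjoint_range_reflTransGen G.undir).subset fun _ ⟨⟨v, hB⟩, _⟩ ↦ ⟨v, hB.symm⟩

theorem pairwiseDisjoint_restDistricts [Std.Symm G.bidir] : G.restDistricts.PairwiseDisjoint id :=
  (pairwiseDisjoint_range_reflTransGen (G.induce G.blockVertsᶜ).bidir).subset
    fun _ ⟨v, _, hD⟩ ↦ ⟨v, hD.symm⟩

theorem isPartition_ntBlocks_union_restDistricts [Std.Symm G.undir] [Std.Symm G.bidir] :
    Setoid.IsPartition (G.ntBlocks ∪ G.restDistricts) := by
  have hdisjoint : (G.ntBlocks ∪ G.restDistricts).PairwiseDisjoint id :=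
    G.pairwiseDisjoint_ntBlocks.union G.pairwiseDisjoint_restDistricts
      fun _ hB _ hD _ ↦ G.disjoint_of_mem_ntBlocks_of_mem_restDistricts hB hD
  exact ⟨fun h ↦ (G.nonempty_of_mem_ntBlocks_union_restDistricts h).ne_empty rfl,
    Setoid.eqv_classes_of_disjoint_union G.sUnion_ntBlocks_union_restDistricts hdisjoint⟩

theorem exists_undir_of_mem_blockVerts [Std.Symm G.undir] {v : V} (hv : v ∈ G.blockVerts) :
    ∃ u, G.undir v u := by
  obtain ⟨_, ⟨⟨a, rfl⟩, hnontrivial⟩, hav⟩ := hv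
  obtain ⟨w, haw, hwv⟩ := hnontrivial.exists_ne v
  have hvw : Relation.ReflTransGen G.undir v w := (symm_of _ hav).trans haw
  obtain rfl | ⟨u, hvu, -⟩ := hvw.cases_head
  · exact absurd rfl hwv
  · exact ⟨u, hvu⟩

end MixedGraph

theorem segregated_partition_general {V : Type*} (G : MixedGraph V)
    (hundir : Std.Symm G.undir) (hbidir : Std.Symm G.bidir)
    (hsegregated : ∀ v, ¬ ((∃ u, G.undir v u) ∧ (∃ u, G.bidir v u))) :
    (∀ S ∈ G.ntBlocks ∪ G.restDistricts, S.Nonempty) ∧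
    (∀ S ∈ G.ntBlocks ∪ G.restDistricts, ∀ T ∈ G.ntBlocks ∪ G.restDistricts,
      S ≠ T → Disjoint S T) ∧
    ⋃₀ (G.ntBlocks ∪ G.restDistricts) = Set.univ ∧
    (∀ v ∈ G.blockVerts, ¬ ∃ w, G.bidir v w) := by
  have hpartition := G.isPartition_ntBlocks_union_restDistricts
  exact ⟨fun _ ↦ Setoid.nonempty_of_mem_partition hpartition,
    fun _ hS _ hT ↦ hpartition.pairwiseDisjoint hS hT,
    hpartition.sUnion_eq_univ,
    fun v hv hw ↦ hsegregated v ⟨G.exists_undir_of_mem_blockVerts hv, hw⟩⟩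

/-- In a segregated graph, the non-trivial blocks together with the
districts of the induced subgraph on the vertices lying in no non-trivial block are
pairwise disjoint nonempty sets whose union is the whole vertex set. In particular,
no vertex of a non-trivial block has an incident bidirected edge. -/
theorem segregated_partition {V : Type*} [Fintype V]
    (G : MixedGraph V) (hG : G.IsSegregated) :
    (∀ S ∈ G.ntBlocks ∪ G.restDistricts, S.Nonempty) ∧
    (∀ S ∈ G.ntBlocks ∪ G.restDistricts, ∀ T ∈ G.ntBlocks ∪ G.restDistricts,
      S ≠ T → Disjoint S T) ∧
    ⋃₀ (G.ntBlocks ∪ G.restDistricts) = Set.univ ∧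
    (∀ v ∈ G.blockVerts, ¬ ∃ w, G.bidir v w) := by
  obtain ⟨⟨-, -, -, hundir, hbidir⟩, -, hsegregated⟩ := hG
  exact segregated_partition_general G ⟨hundir⟩ ⟨hbidir⟩ hsegregated
end

section
/- Front-door identification. Let C, H, A, M, Y range over finite nonempty sets and suppose the joint pmf of (C, H, A, M, Y) factorizes as p(c,h,a,m,y) = p_C(c)·p_H(h)·p_A(a | c,h)·p_M(m | a,c)·p_Y(y | m,c,h), where each factor is a pmf in its leading argument for every value of its conditioning arguments and all factor values are strictly positive. Fix a₀ and define the interventional pmf p_{a₀}(c,h,m,y) = p_C(c)·p_H(h)·p_M(m | a₀,c)·p_Y(y | m,c,h). Then for every y, Σ_{c,h,m} p_{a₀}(c,h,m,y) = Σ_{m,c} P(M=m | A=a₀, C=c) · P(C=c) · Σ_{a'} P(Y=y | M=m, C=c, A=a') · P(A=a' | C=c), where all probabilities P(· | ·) are marginal and conditional probabilities computed from the observed joint pmf p by summation and ratios. -/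
/-!
Two mechanisms can be read off the observed law. Within a stratum `c` the confounder does not reach
`M` except through `A`, so `P(m | a, c) = p_M(m | a, c)`. And within a stratum `c`, conditioning on
`A` blocks the path `M ← A ← H → Y`, so averaging `P(y | m, c, a)` over `P(a | c)` gives the effect
`∑ h, p_H(h | c) p_Y(y | m, c, h)` of `M` on `Y`. The interventional law is the composite of these
two mechanisms. The argument is unaffected by an edge `C → H`.
-/

section FrontDoor

variable {C H A M Y K : Type*}

section ObservedLaw

variable [Fintype H] [AddCommMonoid K] (p : C → H → A → M → Y → K)

/-- The marginal `P(C = c, A = a, M = m, Y = y)`, that is, the full observed law: the latent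
variable `H` is summed out. -/
def marginalCAMY (c : C) (a : A) (m : M) (y : Y) : K := ∑ h, p c h a m y

/-- The marginal `P(C = c, A = a, M = m)`. -/
def marginalCAM [Fintype Y] (c : C) (a : A) (m : M) : K := ∑ h, ∑ y, p c h a m y

/-- The marginal `P(C = c, A = a)`. -/
def marginalCA [Fintype M] [Fintype Y] (c : C) (a : A) : K := ∑ h, ∑ m, ∑ y, p c h a m y

/-- The marginal `P(C = c)`. -/
def marginalC [Fintype A] [Fintype M] [Fintype Y] (c : C) : K :=
  ∑ h, ∑ a, ∑ m, ∑ y, p c h a m y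

theorem marginalCAM_pos [PartialOrder K] [IsOrderedCancelAddMonoid K] [Fintype Y]
    [Nonempty H] [Nonempty Y] {p : C → H → A → M → Y → K}
    (hp : ∀ c h a m y, 0 < p c h a m y) (c : C) (a : A) (m : M) : 0 < marginalCAM p c a m :=
  Finset.sum_pos (fun h _ => Finset.sum_pos (fun y _ => hp c h a m y) Finset.univ_nonempty)
    Finset.univ_nonempty

end ObservedLaw

section FrontDoorFunctional

variable [Fintype H] [Fintype Y] [Semifield K] (p : C → H → A → M → Y → K)

/-- The conditional probability `P(M = m | A = a, C = c)`, with value `0` if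
`P(C = c, A = a) = 0`. -/
def condProbM [Fintype M] (m : M) (a : A) (c : C) : K := marginalCAM p c a m / marginalCA p c a

/-- The conditional probability `P(Y = y | M = m, C = c, A = a)`, with value `0` if
`P(C = c, A = a, M = m) = 0`. -/
def condProbY (y : Y) (m : M) (c : C) (a : A) : K := marginalCAMY p c a m y / marginalCAM p c a m

/-- The conditional probability `P(A = a | C = c)`, with value `0` if `P(C = c) = 0`. -/
def condProbA [Fintype A] [Fintype M] (a : A) (c : C) : K := marginalCA p c a / marginalC p c

/-- The front-door functional of the observed law, which expresses the distribution of `Y` under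
the intervention `A = a₀` without reference to the latent `H`. -/
def frontDoorFunctional [Fintype C] [Fintype A] [Fintype M] (a₀ : A) (y : Y) : K :=
  ∑ m, ∑ c, condProbM p m a₀ c * marginalC p c * ∑ a, condProbY p y m c a * condProbA p a c

end FrontDoorFunctional

/-- The factorization of the joint law `p` along the front-door graph `C → A → M → Y`, `C → M`,
`C → Y` with latent `H → A`, `H → Y`, where an edge `C → H` is also admitted. As `pC` is only a
weight, `p` may be an unnormalized law, whose marginals are then weights too. -/
structure FrontDoorFactorization [CommSemiring K] [Fintype H] [Fintype A] [Fintype M] [Fintype Y]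
    (pC : C → K) (pH : H → C → K) (pA : A → C → H → K) (pM : M → A → C → K)
    (pY : Y → M → C → H → K) (p : C → H → A → M → Y → K) : Prop where
  joint_eq : ∀ c h a m y, p c h a m y = pC c * pH h c * pA a c h * pM m a c * pY y m c h
  sum_pH : ∀ c, ∑ h, pH h c = 1
  sum_pA : ∀ c h, ∑ a, pA a c h = 1
  sum_pM : ∀ a c, ∑ m, pM m a c = 1
  sum_pY : ∀ m c h, ∑ y, pY y m c h = 1

namespace FrontDoorFactorization

variable [Fintype H] [Fintype A] [Fintype M] [Fintype Y]

section Marginals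

variable [CommSemiring K] {pC : C → K} {pH : H → C → K} {pA : A → C → H → K}
  {pM : M → A → C → K} {pY : Y → M → C → H → K} {p : C → H → A → M → Y → K}
  (F : FrontDoorFactorization pC pH pA pM pY p)

include F

theorem sum_joint_y (c : C) (h : H) (a : A) (m : M) :
    ∑ y, p c h a m y = pC c * pH h c * pA a c h * pM m a c := by
  simp only [F.joint_eq, ← Finset.mul_sum, F.sum_pY, mul_one]

theorem sum_joint_m_y (c : C) (h : H) (a : A) :
    ∑ m, ∑ y, p c h a m y = pC c * pH h c * pA a c h := by
  simp only [F.sum_joint_y, ← Finset.mul_sum, F.sum_pM, mul_one]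

theorem marginalC_eq (c : C) : marginalC p c = pC c := by
  simp only [marginalC, F.sum_joint_m_y, ← Finset.mul_sum, F.sum_pA, F.sum_pH, mul_one]

theorem marginalCA_eq (c : C) (a : A) :
    marginalCA p c a = pC c * ∑ h, pH h c * pA a c h := by
  simp only [marginalCA, F.sum_joint_m_y, mul_assoc, Finset.mul_sum]

theorem marginalCAM_eq (c : C) (a : A) (m : M) :
    marginalCAM p c a m = pM m a c * marginalCA p c a := by
  rw [marginalCAM, marginalCA, Finset.mul_sum]
  exact Finset.sum_congr rfl fun h _ => by rw [F.sum_joint_y, F.sum_joint_m_y, mul_comm]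

theorem marginalCAMY_eq (c : C) (a : A) (m : M) (y : Y) :
    marginalCAMY p c a m y = pM m a c * (pC c * ∑ h, pH h c * pA a c h * pY y m c h) := by
  simp only [marginalCAMY, F.joint_eq, Finset.mul_sum]
  exact Finset.sum_congr rfl fun h _ => by ring

end Marginals

section Conditionals

variable [Semifield K] {pC : C → K} {pH : H → C → K} {pA : A → C → H → K}
  {pM : M → A → C → K} {pY : Y → M → C → H → K} {p : C → H → A → M → Y → K}
  (F : FrontDoorFactorization pC pH pA pM pY p)

include F

theorem condProbM_eq {c : C} {a : A} (hCA : marginalCA p c a ≠ 0) (m : M) :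
    condProbM p m a c = pM m a c := by
  rw [condProbM, F.marginalCAM_eq, mul_div_cancel_right₀ _ hCA]

theorem condProbY_mul_condProbA {c : C} {a : A} {m : M} (hCAM : marginalCAM p c a m ≠ 0) (y : Y) :
    condProbY p y m c a * condProbA p a c = ∑ h, pH h c * pA a c h * pY y m c h := by
  have hM : pM m a c ≠ 0 := left_ne_zero_of_mul (F.marginalCAM_eq c a m ▸ hCAM)
  have hCA : marginalCA p c a ≠ 0 := right_ne_zero_of_mul (F.marginalCAM_eq c a m ▸ hCAM)
  have hC : pC c ≠ 0 := left_ne_zero_of_mul (F.marginalCA_eq c a ▸ hCA)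
  rw [condProbY, condProbA, F.marginalCAMY_eq, F.marginalCAM_eq, F.marginalC_eq,
    mul_div_mul_left _ _ hM, div_mul_div_cancel₀ hCA, mul_div_cancel_left₀ _ hC]

theorem sum_condProbY_mul_condProbA {c : C} {m : M} (hCAM : ∀ a, marginalCAM p c a m ≠ 0) (y : Y) :
    ∑ a, condProbY p y m c a * condProbA p a c = ∑ h, pH h c * pY y m c h := by
  calc ∑ a, condProbY p y m c a * condProbA p a c
      = ∑ a, ∑ h, pH h c * pA a c h * pY y m c h :=
        Finset.sum_congr rfl fun a _ => F.condProbY_mul_condProbA (hCAM a) y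
    _ = ∑ h, ∑ a, pH h c * pA a c h * pY y m c h := Finset.sum_comm
    _ = ∑ h, pH h c * pY y m c h := by
        simp only [← Finset.sum_mul, ← Finset.mul_sum, F.sum_pA, mul_one]

end Conditionals

end FrontDoorFactorization

theorem frontdoor_identification_general
    [Fintype C] [Fintype H] [Fintype A] [Fintype M] [Fintype Y] [Semifield K]
    {pC : C → K} {pH : H → C → K} {pA : A → C → H → K} {pM : M → A → C → K}
    {pY : Y → M → C → H → K} {p : C → H → A → M → Y → K}
    (F : FrontDoorFactorization pC pH pA pM pY p)
    (hCAM : ∀ c a m, marginalCAM p c a m ≠ 0) (a₀ : A) (y : Y) :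
    ∑ c, ∑ h, ∑ m, pC c * pH h c * pM m a₀ c * pY y m c h = frontDoorFunctional p a₀ y := by
  have hCA (c : C) (m : M) : marginalCA p c a₀ ≠ 0 :=
    right_ne_zero_of_mul (F.marginalCAM_eq c a₀ m ▸ hCAM c a₀ m)
  calc ∑ c, ∑ h, ∑ m, pC c * pH h c * pM m a₀ c * pY y m c h
      = ∑ c, ∑ m, ∑ h, pC c * pH h c * pM m a₀ c * pY y m c h :=
        Finset.sum_congr rfl fun c _ => Finset.sum_comm
    _ = ∑ m, ∑ c, ∑ h, pC c * pH h c * pM m a₀ c * pY y m c h := Finset.sum_comm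
    _ = ∑ m, ∑ c, pM m a₀ c * pC c * ∑ h, pH h c * pY y m c h := by
        simp only [Finset.mul_sum]
        exact Finset.sum_congr rfl fun m _ => Finset.sum_congr rfl fun c _ =>
          Finset.sum_congr rfl fun h _ => by ring
    _ = frontDoorFunctional p a₀ y :=
        Finset.sum_congr rfl fun m _ => Finset.sum_congr rfl fun c _ => by
          rw [F.condProbM_eq (hCA c m), F.marginalC_eq, F.sum_condProbY_mul_condProbA (hCAM c · m)]

end FrontDoor

/-- front-door identification: if the joint pmf of `(C, H, A, M, Y)`
factorizes as `p(c,h,a,m,y) = p_C(c)·p_H(h)·p_A(a|c,h)·p_M(m|a,c)·p_Y(y|m,c,h)` with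
strictly positive factors, each a pmf in its leading argument, then for every `y` the
interventional probability `Σ_{c,h,m} p_{a₀}(c,h,m,y)` (where
`p_{a₀}(c,h,m,y) = p_C(c)·p_H(h)·p_M(m|a₀,c)·p_Y(y|m,c,h)`) equals the front-door
functional `Σ_{m,c} P(M=m|A=a₀,C=c)·P(C=c)·Σ_{a'} P(Y=y|M=m,C=c,A=a')·P(A=a'|C=c)`,
with all probabilities computed from the observed joint `p` by summation and ratios. -/
theorem frontdoor_identification
    {C H A M Y : Type} [Fintype C] [Fintype H] [Fintype A] [Fintype M] [Fintype Y]
    [Nonempty C] [Nonempty H] [Nonempty A] [Nonempty M] [Nonempty Y]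
    (pC : C → ℝ) (pH : H → ℝ) (pA : A → C → H → ℝ)
    (pM : M → A → C → ℝ) (pY : Y → M → C → H → ℝ)
    (p : C → H → A → M → Y → ℝ)
    (hp : ∀ c h a m y, p c h a m y = pC c * pH h * pA a c h * pM m a c * pY y m c h)
    (hCpos : ∀ c, 0 < pC c) (hHpos : ∀ h, 0 < pH h)
    (hApos : ∀ a c h, 0 < pA a c h) (hMpos : ∀ m a c, 0 < pM m a c)
    (hYpos : ∀ y m c h, 0 < pY y m c h)
    (hCsum : ∑ c, pC c = 1) (hHsum : ∑ h, pH h = 1)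
    (hAsum : ∀ c h, ∑ a, pA a c h = 1)
    (hMsum : ∀ a c, ∑ m, pM m a c = 1)
    (hYsum : ∀ m c h, ∑ y, pY y m c h = 1)
    (a₀ : A) :
    ∀ y : Y,
      (∑ c, ∑ h, ∑ m, pC c * pH h * pM m a₀ c * pY y m c h) =
        ∑ m, ∑ c,
          -- P(M = m | A = a₀, C = c)
          ((∑ h, ∑ y', p c h a₀ m y') / (∑ h, ∑ m', ∑ y', p c h a₀ m' y')) *
            -- P(C = c)
            (∑ h, ∑ a, ∑ m', ∑ y', p c h a m' y') *
            (∑ a',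
              -- P(Y = y | M = m, C = c, A = a')
              ((∑ h, p c h a' m y) / (∑ h, ∑ y', p c h a' m y')) *
                -- P(A = a' | C = c)
                ((∑ h, ∑ m', ∑ y', p c h a' m' y') /
                  (∑ h, ∑ a, ∑ m', ∑ y', p c h a m' y'))) := by
  have hpos (c h a m y) : 0 < p c h a m y := hp c h a m y ▸
    mul_pos (mul_pos (mul_pos (mul_pos (hCpos c) (hHpos h)) (hApos a c h)) (hMpos m a c))
      (hYpos y m c h)
  exact frontdoor_identification_general (pH := fun h _ => pH h)
    ⟨hp, fun _ => hHsum, hAsum, hMsum, hYsum⟩ (fun c a m => (marginalCAM_pos hpos c a m).ne') a₀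
end

section
/- Node-intervention identification in the two-candidate segregated-graph model. Let H_l, H_r, C_l, C_r, A_l, A_r, Y_l, Y_r range over finite nonempty sets and suppose the joint pmf factorizes as p = p_{H_l}(h_l)·p_{H_r}(h_r)·p_{C_l}(c_l | h_l)·p_{C_r}(c_r | h_r)·p_{A_l}(a_l | c_l,c_r,h_l)·p_{A_r}(a_r | c_l,c_r,h_r)·p_Y(y_l,y_r | c_l,c_r,a_l,a_r), where each factor is a pmf in its leading argument(s) for every value of its conditioning arguments and all factor values are strictly positive. Fix a value a of A_l and define the interventional pmf p_a(h_l,h_r,c_l,c_r,a_r,y_l,y_r) by deleting the factor p_{A_l} and evaluating the remaining factors at A_l = a. Then for every y_l, Σ (over all other variables) of p_a equals Σ_{c_l,c_r,a_r,y_r} P(Y_l=y_l, Y_r=y_r | C_l=c_l, C_r=c_r, A_r=a_r, A_l=a) · P(A_r=a_r | C_l=c_l, C_r=c_r) · P(C_l=c_l) · P(C_r=c_r), where all probabilities P(· | ·) are computed from the observed joint pmf p. -/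
/-!
Summing the latent variables out of `p` leaves one factor per candidate: the observed law is
`Q_l(a_l, c_l, c_r) · Q_r(a_r, c_l, c_r) · p_Y`. Hence `P(y_l, y_r | c_l, c_r, a_r, a) = p_Y`, and
`C_l`, `C_r` are independent, which turns `P(a_r | c_l, c_r) · P(c_l) · P(c_r)` into
`P(c_l, c_r, a_r) = P(c_l) · Q_r(a_r, c_l, c_r)`. Deleting `p_{A_l}` from the factorization and
summing out the latent variables gives the same product `P(c_l) · Q_r(a_r, c_l, c_r) · p_Y`.
-/

theorem sum_sum_comm_sum_sum_sum_sum {ι₁ ι₂ κ₁ κ₂ κ₃ κ₄ M : Type*} [AddCommMonoid M]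
    [Fintype ι₁] [Fintype ι₂] [Fintype κ₁] [Fintype κ₂] [Fintype κ₃] [Fintype κ₄]
    (f : ι₁ → ι₂ → κ₁ → κ₂ → κ₃ → κ₄ → M) :
    ∑ i₁, ∑ i₂, ∑ k₁, ∑ k₂, ∑ k₃, ∑ k₄, f i₁ i₂ k₁ k₂ k₃ k₄ =
      ∑ k₁, ∑ k₂, ∑ k₃, ∑ k₄, ∑ i₁, ∑ i₂, f i₁ i₂ k₁ k₂ k₃ k₄ := by
  simpa only [Fintype.sum_prod_type] using
    Finset.sum_comm (s := (Finset.univ : Finset (ι₁ × ι₂)))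
      (t := (Finset.univ : Finset (κ₁ × κ₂ × κ₃ × κ₄)))
      (f := fun i k ↦ f i.1 i.2 k.1 k.2.1 k.2.2.1 k.2.2.2)

theorem sum_univ_pos {ι M : Type*} [Fintype ι] [Nonempty ι] [AddCommMonoid M] [PartialOrder M]
    [IsOrderedCancelAddMonoid M] {f : ι → M} (hf : ∀ i, 0 < f i) : 0 < ∑ i, f i :=
  Finset.sum_pos (fun i _ ↦ hf i) Finset.univ_nonempty

/-- The factors of the two-candidate election model. Candidate `s ∈ {l, r}` has a latent confounder
`Hₛ`, covariates `Cₛ` and a decision `Aₛ`; the outcomes `(Yl, Yr)` form one block. In each factor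
the leading arguments are the variables being generated and the remaining ones their parents. The
factors are normalized, but take values in any commutative semiring and may be signed. -/
structure TwoCandidateModel (K Hl Hr Cl Cr Al Ar Yl Yr : Type*) [CommSemiring K]
    [Fintype Hl] [Fintype Hr] [Fintype Cl] [Fintype Cr]
    [Fintype Al] [Fintype Ar] [Fintype Yl] [Fintype Yr] where
  pHl : Hl → K
  pHr : Hr → K
  pCl : Cl → Hl → K
  pCr : Cr → Hr → K
  pAl : Al → Cl → Cr → Hl → K
  pAr : Ar → Cl → Cr → Hr → K
  pY : Yl → Yr → Cl → Cr → Al → Ar → K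
  sum_pHl : ∑ hl, pHl hl = 1
  sum_pHr : ∑ hr, pHr hr = 1
  sum_pCl : ∀ hl, ∑ cl, pCl cl hl = 1
  sum_pCr : ∀ hr, ∑ cr, pCr cr hr = 1
  sum_pAl : ∀ cl cr hl, ∑ al, pAl al cl cr hl = 1
  sum_pAr : ∀ cl cr hr, ∑ ar, pAr ar cl cr hr = 1
  sum_pY : ∀ cl cr al ar, ∑ yl, ∑ yr, pY yl yr cl cr al ar = 1

namespace TwoCandidateModel

variable {K Hl Hr Cl Cr Al Ar Yl Yr : Type*}
  [Fintype Hl] [Fintype Hr] [Fintype Cl] [Fintype Cr]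
  [Fintype Al] [Fintype Ar] [Fintype Yl] [Fintype Yr]

section CommSemiring

variable [CommSemiring K] (M : TwoCandidateModel K Hl Hr Cl Cr Al Ar Yl Yr)

/-- The joint law `p` of all variables. -/
def joint (hl : Hl) (hr : Hr) (cl : Cl) (cr : Cr) (al : Al) (ar : Ar) (yl : Yl) (yr : Yr) : K :=
  M.pHl hl * M.pHr hr * M.pCl cl hl * M.pCr cr hr * M.pAl al cl cr hl * M.pAr ar cl cr hr *
    M.pY yl yr cl cr al ar

/-- The truncated factorization `p_a`: the law of the remaining variables under the node
intervention `do(A_l = a)`. -/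
def truncated (a : Al) (hl : Hl) (hr : Hr) (cl : Cl) (cr : Cr) (ar : Ar) (yl : Yl) (yr : Yr) : K :=
  M.pHl hl * M.pHr hr * M.pCl cl hl * M.pCr cr hr * M.pAr ar cl cr hr * M.pY yl yr cl cr a ar

/-- The law of the left candidate's covariates. -/
def covariateLeft (cl : Cl) : K := ∑ hl, M.pHl hl * M.pCl cl hl

/-- The law of the right candidate's covariates. -/
def covariateRight (cr : Cr) : K := ∑ hr, M.pHr hr * M.pCr cr hr

/-- The kernel `Q_l` of the district `{C_l, A_l}`, the set of observed variables tied together by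
the confounder `H_l`: the product of their factors with `H_l` summed out. -/
def districtLeft (al : Al) (cl : Cl) (cr : Cr) : K :=
  ∑ hl, M.pHl hl * M.pCl cl hl * M.pAl al cl cr hl

/-- The kernel `Q_r` of the district `{C_r, A_r}`, the set of observed variables tied together by
the confounder `H_r`: the product of their factors with `H_r` summed out. -/
def districtRight (ar : Ar) (cl : Cl) (cr : Cr) : K :=
  ∑ hr, M.pHr hr * M.pCr cr hr * M.pAr ar cl cr hr

theorem joint_eq_left_mul_right_mul_outcome (hl : Hl) (hr : Hr) (cl : Cl) (cr : Cr) (al : Al)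
    (ar : Ar) (yl : Yl) (yr : Yr) :
    M.joint hl hr cl cr al ar yl yr =
      (M.pHl hl * M.pCl cl hl * M.pAl al cl cr hl) *
        (M.pHr hr * M.pCr cr hr * M.pAr ar cl cr hr) * M.pY yl yr cl cr al ar := by
  rw [joint]
  ring

theorem sum_outcomes_joint (hl : Hl) (hr : Hr) (cl : Cl) (cr : Cr) (al : Al) (ar : Ar) :
    ∑ yl, ∑ yr, M.joint hl hr cl cr al ar yl yr =
      (M.pHl hl * M.pCl cl hl * M.pAl al cl cr hl) *
        (M.pHr hr * M.pCr cr hr * M.pAr ar cl cr hr) := by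
  simp only [joint_eq_left_mul_right_mul_outcome, ← Finset.mul_sum, M.sum_pY, mul_one]

theorem sum_decisionLeft_outcomes_joint (hl : Hl) (hr : Hr) (cl : Cl) (cr : Cr) (ar : Ar) :
    ∑ al, ∑ yl, ∑ yr, M.joint hl hr cl cr al ar yl yr =
      (M.pHl hl * M.pCl cl hl) * (M.pHr hr * M.pCr cr hr * M.pAr ar cl cr hr) := by
  simp only [sum_outcomes_joint, ← Finset.sum_mul, ← Finset.mul_sum, M.sum_pAl, mul_one]

theorem sum_decisions_outcomes_joint (hl : Hl) (hr : Hr) (cl : Cl) (cr : Cr) :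
    ∑ al, ∑ ar, ∑ yl, ∑ yr, M.joint hl hr cl cr al ar yl yr =
      (M.pHl hl * M.pCl cl hl) * (M.pHr hr * M.pCr cr hr) := by
  rw [Finset.sum_comm]
  simp only [sum_decisionLeft_outcomes_joint, ← Finset.mul_sum, M.sum_pAr, mul_one]

theorem marginal_observed (cl : Cl) (cr : Cr) (al : Al) (ar : Ar) (yl : Yl) (yr : Yr) :
    ∑ hl, ∑ hr, M.joint hl hr cl cr al ar yl yr =
      M.districtLeft al cl cr * M.districtRight ar cl cr * M.pY yl yr cl cr al ar := by
  rw [districtLeft, districtRight, Finset.sum_mul_sum]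
  simp only [joint_eq_left_mul_right_mul_outcome, Finset.sum_mul]

theorem marginal_covariates_decisions (cl : Cl) (cr : Cr) (al : Al) (ar : Ar) :
    ∑ hl, ∑ hr, ∑ yl, ∑ yr, M.joint hl hr cl cr al ar yl yr =
      M.districtLeft al cl cr * M.districtRight ar cl cr := by
  simp only [sum_outcomes_joint, districtLeft, districtRight, Finset.sum_mul_sum]

theorem marginal_covariates_decisionRight (cl : Cl) (cr : Cr) (ar : Ar) :
    ∑ hl, ∑ hr, ∑ al, ∑ yl, ∑ yr, M.joint hl hr cl cr al ar yl yr =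
      M.covariateLeft cl * M.districtRight ar cl cr := by
  simp only [sum_decisionLeft_outcomes_joint, covariateLeft, districtRight, Finset.sum_mul_sum]

theorem marginal_covariates (cl : Cl) (cr : Cr) :
    ∑ hl, ∑ hr, ∑ al, ∑ ar, ∑ yl, ∑ yr, M.joint hl hr cl cr al ar yl yr =
      M.covariateLeft cl * M.covariateRight cr := by
  simp only [sum_decisions_outcomes_joint, covariateLeft, covariateRight, Finset.sum_mul_sum]

theorem marginal_covariateLeft (cl : Cl) :
    ∑ hl, ∑ hr, ∑ cr, ∑ al, ∑ ar, ∑ yl, ∑ yr, M.joint hl hr cl cr al ar yl yr =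
      M.covariateLeft cl := by
  simp only [sum_decisions_outcomes_joint, ← Finset.mul_sum, M.sum_pCr, M.sum_pHr, mul_one,
    covariateLeft]

theorem marginal_covariateRight (cr : Cr) :
    ∑ hl, ∑ hr, ∑ cl, ∑ al, ∑ ar, ∑ yl, ∑ yr, M.joint hl hr cl cr al ar yl yr =
      M.covariateRight cr := by
  simp only [sum_decisions_outcomes_joint, ← Finset.sum_mul, ← Finset.mul_sum, M.sum_pCl,
    M.sum_pHl, mul_one, one_mul, covariateRight]

theorem marginal_covariates_eq_mul (cl : Cl) (cr : Cr) :
    ∑ hl, ∑ hr, ∑ al, ∑ ar, ∑ yl, ∑ yr, M.joint hl hr cl cr al ar yl yr =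
      (∑ hl, ∑ hr, ∑ cr', ∑ al, ∑ ar, ∑ yl, ∑ yr, M.joint hl hr cl cr' al ar yl yr) *
        ∑ hl, ∑ hr, ∑ cl', ∑ al, ∑ ar, ∑ yl, ∑ yr, M.joint hl hr cl' cr al ar yl yr := by
  rw [marginal_covariates, marginal_covariateLeft, marginal_covariateRight]

theorem sum_latent_truncated (a : Al) (cl : Cl) (cr : Cr) (ar : Ar) (yl : Yl) (yr : Yr) :
    ∑ hl, ∑ hr, M.truncated a hl hr cl cr ar yl yr =
      M.covariateLeft cl * M.districtRight ar cl cr * M.pY yl yr cl cr a ar := by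
  rw [covariateLeft, districtRight, Finset.sum_mul_sum]
  simp only [truncated, Finset.sum_mul]
  refine Finset.sum_congr rfl fun hl _ ↦ Finset.sum_congr rfl fun hr _ ↦ ?_
  ring

end CommSemiring

section StrictOrderedRing

variable [CommSemiring K] [PartialOrder K] [IsStrictOrderedRing K]
  (M : TwoCandidateModel K Hl Hr Cl Cr Al Ar Yl Yr)

theorem joint_pos (hHl : ∀ hl, 0 < M.pHl hl) (hHr : ∀ hr, 0 < M.pHr hr)
    (hCl : ∀ cl hl, 0 < M.pCl cl hl) (hCr : ∀ cr hr, 0 < M.pCr cr hr)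
    (hAl : ∀ al cl cr hl, 0 < M.pAl al cl cr hl) (hAr : ∀ ar cl cr hr, 0 < M.pAr ar cl cr hr)
    (hY : ∀ yl yr cl cr al ar, 0 < M.pY yl yr cl cr al ar)
    (hl : Hl) (hr : Hr) (cl : Cl) (cr : Cr) (al : Al) (ar : Ar) (yl : Yl) (yr : Yr) :
    0 < M.joint hl hr cl cr al ar yl yr := by
  rw [joint]
  apply_rules [mul_pos]

variable [Nonempty Hl] [Nonempty Hr] [Nonempty Yl] [Nonempty Yr]

theorem marginal_covariates_decisions_pos
    (hM : ∀ hl hr cl cr al ar yl yr, 0 < M.joint hl hr cl cr al ar yl yr)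
    (cl : Cl) (cr : Cr) (al : Al) (ar : Ar) :
    0 < ∑ hl, ∑ hr, ∑ yl, ∑ yr, M.joint hl hr cl cr al ar yl yr :=
  sum_univ_pos fun _ ↦ sum_univ_pos fun _ ↦ sum_univ_pos fun _ ↦ sum_univ_pos fun _ ↦ hM ..

theorem marginal_covariates_pos [Nonempty Al] [Nonempty Ar]
    (hM : ∀ hl hr cl cr al ar yl yr, 0 < M.joint hl hr cl cr al ar yl yr) (cl : Cl) (cr : Cr) :
    0 < ∑ hl, ∑ hr, ∑ al, ∑ ar, ∑ yl, ∑ yr, M.joint hl hr cl cr al ar yl yr :=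
  sum_univ_pos fun _ ↦ sum_univ_pos fun _ ↦ sum_univ_pos fun _ ↦ sum_univ_pos fun _ ↦
    sum_univ_pos fun _ ↦ sum_univ_pos fun _ ↦ hM ..

end StrictOrderedRing

section Semifield

variable [Semifield K] (M : TwoCandidateModel K Hl Hr Cl Cr Al Ar Yl Yr)

theorem cond_outcomes_eq {cl : Cl} {cr : Cr} {al : Al} {ar : Ar}
    (h : ∑ hl, ∑ hr, ∑ yl, ∑ yr, M.joint hl hr cl cr al ar yl yr ≠ 0) (yl : Yl) (yr : Yr) :
    (∑ hl, ∑ hr, M.joint hl hr cl cr al ar yl yr) /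
        (∑ hl, ∑ hr, ∑ yl', ∑ yr', M.joint hl hr cl cr al ar yl' yr') =
      M.pY yl yr cl cr al ar := by
  rw [marginal_covariates_decisions] at h ⊢
  rw [marginal_observed, mul_div_cancel_left₀ _ h]

theorem cond_decisionRight_mul_covariates {cl : Cl} {cr : Cr}
    (h : ∑ hl, ∑ hr, ∑ al, ∑ ar, ∑ yl, ∑ yr, M.joint hl hr cl cr al ar yl yr ≠ 0) (ar : Ar) :
    (∑ hl, ∑ hr, ∑ al, ∑ yl, ∑ yr, M.joint hl hr cl cr al ar yl yr) /
          (∑ hl, ∑ hr, ∑ al, ∑ ar', ∑ yl, ∑ yr, M.joint hl hr cl cr al ar' yl yr) *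
        (∑ hl, ∑ hr, ∑ cr', ∑ al, ∑ ar', ∑ yl, ∑ yr, M.joint hl hr cl cr' al ar' yl yr) *
        (∑ hl, ∑ hr, ∑ cl', ∑ al, ∑ ar', ∑ yl, ∑ yr, M.joint hl hr cl' cr al ar' yl yr) =
      M.covariateLeft cl * M.districtRight ar cl cr := by
  rw [mul_assoc, ← marginal_covariates_eq_mul, div_mul_cancel₀ _ h,
    marginal_covariates_decisionRight]

end Semifield

end TwoCandidateModel

open TwoCandidateModel in
theorem node_intervention_identification_general
    {K Hl Hr Cl Cr Al Ar Yl Yr : Type*} [Semifield K]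
    [Fintype Hl] [Fintype Hr] [Fintype Cl] [Fintype Cr]
    [Fintype Al] [Fintype Ar] [Fintype Yl] [Fintype Yr]
    (M : TwoCandidateModel K Hl Hr Cl Cr Al Ar Yl Yr) (a : Al)
    (hCA : ∀ cl cr ar, ∑ hl, ∑ hr, ∑ yl, ∑ yr, M.joint hl hr cl cr a ar yl yr ≠ 0)
    (hC : ∀ cl cr, ∑ hl, ∑ hr, ∑ al, ∑ ar, ∑ yl, ∑ yr, M.joint hl hr cl cr al ar yl yr ≠ 0)
    (yl : Yl) :
    ∑ hl, ∑ hr, ∑ cl, ∑ cr, ∑ ar, ∑ yr, M.truncated a hl hr cl cr ar yl yr =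
      ∑ cl, ∑ cr, ∑ ar, ∑ yr,
        ((∑ hl, ∑ hr, M.joint hl hr cl cr a ar yl yr) /
            (∑ hl, ∑ hr, ∑ yl', ∑ yr', M.joint hl hr cl cr a ar yl' yr')) *
          ((∑ hl, ∑ hr, ∑ al, ∑ yl', ∑ yr', M.joint hl hr cl cr al ar yl' yr') /
            (∑ hl, ∑ hr, ∑ al, ∑ ar', ∑ yl', ∑ yr', M.joint hl hr cl cr al ar' yl' yr')) *
          (∑ hl, ∑ hr, ∑ cr', ∑ al, ∑ ar', ∑ yl', ∑ yr', M.joint hl hr cl cr' al ar' yl' yr') *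
          (∑ hl, ∑ hr, ∑ cl', ∑ al, ∑ ar', ∑ yl', ∑ yr', M.joint hl hr cl' cr al ar' yl' yr') := by
  rw [sum_sum_comm_sum_sum_sum_sum]
  refine Finset.sum_congr rfl fun cl _ ↦ Finset.sum_congr rfl fun cr _ ↦
    Finset.sum_congr rfl fun ar _ ↦ Finset.sum_congr rfl fun yr _ ↦ ?_
  rw [sum_latent_truncated, cond_outcomes_eq M (hCA cl cr ar), mul_assoc (M.pY ..),
    mul_assoc (M.pY ..), cond_decisionRight_mul_covariates M (hC cl cr), mul_comm]

/-- node-intervention identification in the two-candidate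
segregated-graph model: if the joint pmf factorizes as
`p = p_{H_l}(h_l)·p_{H_r}(h_r)·p_{C_l}(c_l|h_l)·p_{C_r}(c_r|h_r)·
p_{A_l}(a_l|c_l,c_r,h_l)·p_{A_r}(a_r|c_l,c_r,h_r)·p_Y(y_l,y_r|c_l,c_r,a_l,a_r)`
with strictly positive factors, each a pmf in its leading argument(s), then for every
`y_l` the interventional probability (summing the truncated factorization `p_a`, with
the `p_{A_l}` factor deleted and `A_l = a`, over all other variables) equals
`Σ_{c_l,c_r,a_r,y_r} P(Y_l=y_l,Y_r=y_r|C_l=c_l,C_r=c_r,A_r=a_r,A_l=a) ·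
P(A_r=a_r|C_l=c_l,C_r=c_r) · P(C_l=c_l) · P(C_r=c_r)`, with all probabilities computed
from the observed joint `p`. -/
theorem node_intervention_identification
    {Hl Hr Cl Cr Al Ar Yl Yr : Type}
    [Fintype Hl] [Fintype Hr] [Fintype Cl] [Fintype Cr]
    [Fintype Al] [Fintype Ar] [Fintype Yl] [Fintype Yr]
    [Nonempty Hl] [Nonempty Hr] [Nonempty Cl] [Nonempty Cr]
    [Nonempty Al] [Nonempty Ar] [Nonempty Yl] [Nonempty Yr]
    (pHl : Hl → ℝ) (pHr : Hr → ℝ) (pCl : Cl → Hl → ℝ) (pCr : Cr → Hr → ℝ)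
    (pAl : Al → Cl → Cr → Hl → ℝ) (pAr : Ar → Cl → Cr → Hr → ℝ)
    (pY : Yl → Yr → Cl → Cr → Al → Ar → ℝ)
    (p : Hl → Hr → Cl → Cr → Al → Ar → Yl → Yr → ℝ)
    (hp : ∀ hl hr cl cr al ar yl yr,
      p hl hr cl cr al ar yl yr =
        pHl hl * pHr hr * pCl cl hl * pCr cr hr * pAl al cl cr hl *
          pAr ar cl cr hr * pY yl yr cl cr al ar)
    (hHlpos : ∀ hl, 0 < pHl hl) (hHrpos : ∀ hr, 0 < pHr hr)
    (hClpos : ∀ cl hl, 0 < pCl cl hl) (hCrpos : ∀ cr hr, 0 < pCr cr hr)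
    (hAlpos : ∀ al cl cr hl, 0 < pAl al cl cr hl)
    (hArpos : ∀ ar cl cr hr, 0 < pAr ar cl cr hr)
    (hYpos : ∀ yl yr cl cr al ar, 0 < pY yl yr cl cr al ar)
    (hHlsum : ∑ hl, pHl hl = 1) (hHrsum : ∑ hr, pHr hr = 1)
    (hClsum : ∀ hl, ∑ cl, pCl cl hl = 1) (hCrsum : ∀ hr, ∑ cr, pCr cr hr = 1)
    (hAlsum : ∀ cl cr hl, ∑ al, pAl al cl cr hl = 1)
    (hArsum : ∀ cl cr hr, ∑ ar, pAr ar cl cr hr = 1)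
    (hYsum : ∀ cl cr al ar, ∑ yl, ∑ yr, pY yl yr cl cr al ar = 1)
    (a : Al) :
    ∀ yl : Yl,
      (∑ hl, ∑ hr, ∑ cl, ∑ cr, ∑ ar, ∑ yr,
          pHl hl * pHr hr * pCl cl hl * pCr cr hr * pAr ar cl cr hr *
            pY yl yr cl cr a ar) =
        ∑ cl, ∑ cr, ∑ ar, ∑ yr,
          -- P(Y_l = y_l, Y_r = y_r | C_l = c_l, C_r = c_r, A_r = a_r, A_l = a)
          ((∑ hl, ∑ hr, p hl hr cl cr a ar yl yr) /
              (∑ hl, ∑ hr, ∑ yl', ∑ yr', p hl hr cl cr a ar yl' yr')) *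
            -- P(A_r = a_r | C_l = c_l, C_r = c_r)
            ((∑ hl, ∑ hr, ∑ al, ∑ yl', ∑ yr', p hl hr cl cr al ar yl' yr') /
              (∑ hl, ∑ hr, ∑ al, ∑ ar', ∑ yl', ∑ yr', p hl hr cl cr al ar' yl' yr')) *
            -- P(C_l = c_l)
            (∑ hl, ∑ hr, ∑ cr', ∑ al, ∑ ar', ∑ yl', ∑ yr',
              p hl hr cl cr' al ar' yl' yr') *
            -- P(C_r = c_r)
            (∑ hl, ∑ hr, ∑ cl', ∑ al, ∑ ar', ∑ yl', ∑ yr',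
              p hl hr cl' cr al ar' yl' yr') := by
  let M : TwoCandidateModel ℝ Hl Hr Cl Cr Al Ar Yl Yr :=
    ⟨pHl, pHr, pCl, pCr, pAl, pAr, pY, hHlsum, hHrsum, hClsum, hCrsum, hAlsum, hArsum, hYsum⟩
  obtain rfl : p = M.joint := by
    funext
    exact hp ..
  have hpos := M.joint_pos hHlpos hHrpos hClpos hCrpos hAlpos hArpos hYpos
  exact node_intervention_identification_general M a
    (fun cl cr ar ↦ (M.marginal_covariates_decisions_pos hpos cl cr a ar).ne')
    (fun cl cr ↦ (M.marginal_covariates_pos hpos cl cr).ne')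
end

section
/- Policy-intervention identification in the two-candidate segregated-graph model. Let H_l, H_r, C_l, C_r, A_l, A_r, Y_l, Y_r range over finite nonempty sets and suppose the joint pmf factorizes as p = p_{H_l}(h_l)·p_{H_r}(h_r)·p_{C_l}(c_l | h_l)·p_{C_r}(c_r | h_r)·p_{A_l}(a_l | c_l,c_r,h_l)·p_{A_r}(a_r | c_l,c_r,h_r)·p_Y(y_l,y_r | c_l,c_r,a_l,a_r), where each factor is a pmf in its leading argument(s) for every value of its conditioning arguments and all factor values are strictly positive. Let f : C_l × C_r → A_l be any function (a deterministic treatment policy for A_l). Define the interventional pmf p_f(h_l,h_r,c_l,c_r,a_r,y_l,y_r) by deleting the factor p_{A_l} and evaluating the remaining factors at A_l = f(c_l,c_r). Then for every y_l, Σ (over all other variables) of p_f equals Σ_{c_l,c_r,a_r,y_r} P(Y_l=y_l, Y_r=y_r | C_l=c_l, C_r=c_r, A_r=a_r, A_l=f(c_l,c_r)) · P(A_r=a_r | C_l=c_l, C_r=c_r) · P(C_l=c_l) · P(C_r=c_r), where all probabilities P(· | ·) are computed from the observed joint pmf p. -/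
/-!
The latent variable of each candidate can be summed out separately, so every observed marginal is a
product of a left factor, a right factor and possibly the outcome kernel. Write `L₀`, `R₀` for the
covariate factors and `L`, `R` for those including the decision. Then
`P(y | c, a) = L R P_Y / (L R)`, `P(a_r | c) = L₀ R / (L₀ R₀)` and `P(c_l) P(c_r) = L₀ R₀`, whose
product is `L₀ R P_Y`: the result of summing the truncated factorization over the latent variables.
Zero covariate factors are harmless: `L₀` occurs on both sides, and `R₀ = 0` forces `R = 0`.
-/

open Finset

theorem sum_pair_comm_four {R α β γ δ ε ζ : Type*} [AddCommMonoid R] [Fintype α] [Fintype β]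
    [Fintype γ] [Fintype δ] [Fintype ε] [Fintype ζ] (g : α → β → γ → δ → ε → ζ → R) :
    ∑ a, ∑ b, ∑ c, ∑ d, ∑ e, ∑ z, g a b c d e z =
      ∑ c, ∑ d, ∑ e, ∑ z, ∑ a, ∑ b, g a b c d e z := by
  simpa only [Fintype.sum_prod_type] using
    sum_comm (s := (univ : Finset (α × β))) (t := (univ : Finset (γ × δ × ε × ζ)))
      (f := fun x y => g x.1 x.2 y.1 y.2.1 y.2.2.1 y.2.2.2)

/-- The part of the model describing one candidate: a latent confounder in `H`, covariates in `C`
and a decision in `A`, each given by its conditional pmf. The decision depends on a context in `D`,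
which is the pair of both candidates' covariates in `ElectionModel`. -/
structure CandidateModel (K H C D A : Type*) [CommSemiring K] [PartialOrder K]
    [Fintype H] [Fintype C] [Fintype A] where
  latent : H → K
  covariate : C → H → K
  decision : A → D → H → K
  latent_nonneg : ∀ h, 0 ≤ latent h
  covariate_nonneg : ∀ c h, 0 ≤ covariate c h
  decision_nonneg : ∀ a d h, 0 ≤ decision a d h
  sum_latent : ∑ h, latent h = 1
  sum_covariate : ∀ h, ∑ c, covariate c h = 1
  sum_decision : ∀ d h, ∑ a, decision a d h = 1

namespace CandidateModel

variable {K H C D A : Type*} [Fintype H] [Fintype C] [Fintype A]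
  [CommSemiring K] [PartialOrder K] (M : CandidateModel K H C D A)

/-- The marginal probability `P(C = c)` for one candidate. -/
def covariateProb (c : C) : K := ∑ h, M.latent h * M.covariate c h

/-- The probability of covariates `c` and decision `a` for one candidate, with the decision made in
the context `d`. -/
def covariateDecisionProb (c : C) (d : D) (a : A) : K :=
  ∑ h, M.latent h * M.covariate c h * M.decision a d h

theorem covariateDecisionProb_eq_zero [IsOrderedRing K] {c : C} (hc : M.covariateProb c = 0)
    (d : D) (a : A) : M.covariateDecisionProb c d a = 0 := by
  have weight_zero : ∀ h ∈ univ, M.latent h * M.covariate c h = 0 :=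
    (sum_eq_zero_iff_of_nonneg fun h _ =>
      mul_nonneg (M.latent_nonneg h) (M.covariate_nonneg c h)).mp hc
  exact sum_eq_zero fun h hh => by rw [weight_zero h hh, zero_mul]

theorem covariateProb_pos [IsStrictOrderedRing K] [Nonempty H] {c : C}
    (hlatent : ∀ h, 0 < M.latent h) (hcovariate : ∀ h, 0 < M.covariate c h) :
    0 < M.covariateProb c :=
  sum_pos (fun h _ => mul_pos (hlatent h) (hcovariate h)) univ_nonempty

theorem covariateDecisionProb_pos [IsStrictOrderedRing K] [Nonempty H] {c : C} {d : D} {a : A}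
    (hlatent : ∀ h, 0 < M.latent h) (hcovariate : ∀ h, 0 < M.covariate c h)
    (hdecision : ∀ h, 0 < M.decision a d h) : 0 < M.covariateDecisionProb c d a :=
  sum_pos (fun h _ => mul_pos (mul_pos (hlatent h) (hcovariate h)) (hdecision h)) univ_nonempty

end CandidateModel

/-- The two-candidate segregated-graph model: two candidates with independent latent confounders,
whose decisions see both candidates' covariates, and a joint outcome block
`P(y_l, y_r | c_l, c_r, a_l, a_r)`. -/
structure ElectionModel (K Hl Hr Cl Cr Al Ar Yl Yr : Type*) [CommSemiring K] [PartialOrder K]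
    [Fintype Hl] [Fintype Hr] [Fintype Cl] [Fintype Cr]
    [Fintype Al] [Fintype Ar] [Fintype Yl] [Fintype Yr] where
  left : CandidateModel K Hl Cl (Cl × Cr) Al
  right : CandidateModel K Hr Cr (Cl × Cr) Ar
  outcome : Yl → Yr → Cl → Cr → Al → Ar → K
  outcome_nonneg : ∀ yl yr cl cr al ar, 0 ≤ outcome yl yr cl cr al ar
  sum_outcome : ∀ cl cr al ar, ∑ yl, ∑ yr, outcome yl yr cl cr al ar = 1

namespace ElectionModel

variable {K Hl Hr Cl Cr Al Ar Yl Yr : Type*}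
  [Fintype Hl] [Fintype Hr] [Fintype Cl] [Fintype Cr]
  [Fintype Al] [Fintype Ar] [Fintype Yl] [Fintype Yr]

section CommSemiring

variable [CommSemiring K] [PartialOrder K] (M : ElectionModel K Hl Hr Cl Cr Al Ar Yl Yr)

/-- The joint pmf `p` of latent and observed variables. -/
def joint (hl : Hl) (hr : Hr) (cl : Cl) (cr : Cr) (al : Al) (ar : Ar) (yl : Yl) (yr : Yr) : K :=
  M.left.latent hl * M.right.latent hr * M.left.covariate cl hl * M.right.covariate cr hr *
    M.left.decision al (cl, cr) hl * M.right.decision ar (cl, cr) hr * M.outcome yl yr cl cr al ar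

/-- The joint pmf with the factor of the left decision deleted. The interventional pmf `p_f` of a
policy `f` is its value at `al = f cl cr`. -/
def truncated (hl : Hl) (hr : Hr) (cl : Cl) (cr : Cr) (al : Al) (ar : Ar) (yl : Yl) (yr : Yr) : K :=
  M.left.latent hl * M.right.latent hr * M.left.covariate cl hl * M.right.covariate cr hr *
    M.right.decision ar (cl, cr) hr * M.outcome yl yr cl cr al ar

/-- `P(C_l = cl, C_r = cr, A_l = al, A_r = ar, Y_l = yl, Y_r = yr)`. -/
def observedProb (cl : Cl) (cr : Cr) (al : Al) (ar : Ar) (yl : Yl) (yr : Yr) : K :=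
  ∑ hl, ∑ hr, M.joint hl hr cl cr al ar yl yr

/-- `P(C_l = cl, C_r = cr, A_l = al, A_r = ar)`. -/
def decisionsProb (cl : Cl) (cr : Cr) (al : Al) (ar : Ar) : K :=
  ∑ hl, ∑ hr, ∑ yl, ∑ yr, M.joint hl hr cl cr al ar yl yr

/-- `P(C_l = cl, C_r = cr, A_l = al)`. -/
def leftDecisionProb (cl : Cl) (cr : Cr) (al : Al) : K :=
  ∑ hl, ∑ hr, ∑ ar, ∑ yl, ∑ yr, M.joint hl hr cl cr al ar yl yr

/-- `P(C_l = cl, C_r = cr, A_r = ar)`. -/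
def rightDecisionProb (cl : Cl) (cr : Cr) (ar : Ar) : K :=
  ∑ hl, ∑ hr, ∑ al, ∑ yl, ∑ yr, M.joint hl hr cl cr al ar yl yr

/-- `P(C_l = cl, C_r = cr)`. -/
def covariatesProb (cl : Cl) (cr : Cr) : K :=
  ∑ hl, ∑ hr, ∑ al, ∑ ar, ∑ yl, ∑ yr, M.joint hl hr cl cr al ar yl yr

/-- `P(C_l = cl)`. -/
def leftCovariateProb (cl : Cl) : K :=
  ∑ hl, ∑ hr, ∑ cr, ∑ al, ∑ ar, ∑ yl, ∑ yr, M.joint hl hr cl cr al ar yl yr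

/-- `P(C_r = cr)`. -/
def rightCovariateProb (cr : Cr) : K :=
  ∑ hl, ∑ hr, ∑ cl, ∑ al, ∑ ar, ∑ yl, ∑ yr, M.joint hl hr cl cr al ar yl yr

theorem sum_truncated (cl : Cl) (cr : Cr) (al : Al) (ar : Ar) (yl : Yl) (yr : Yr) :
    ∑ hl, ∑ hr, M.truncated hl hr cl cr al ar yl yr =
      M.left.covariateProb cl * M.right.covariateDecisionProb cr (cl, cr) ar *
        M.outcome yl yr cl cr al ar := by
  rw [CandidateModel.covariateProb, CandidateModel.covariateDecisionProb, sum_mul_sum]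
  simp only [sum_mul]
  refine sum_congr rfl fun hl _ => sum_congr rfl fun hr _ => ?_
  rw [truncated]
  ring

theorem observedProb_eq (cl : Cl) (cr : Cr) (al : Al) (ar : Ar) (yl : Yl) (yr : Yr) :
    M.observedProb cl cr al ar yl yr =
      M.left.covariateDecisionProb cl (cl, cr) al * M.right.covariateDecisionProb cr (cl, cr) ar *
        M.outcome yl yr cl cr al ar := by
  rw [CandidateModel.covariateDecisionProb, CandidateModel.covariateDecisionProb, sum_mul_sum]
  simp only [sum_mul]
  refine sum_congr rfl fun hl _ => sum_congr rfl fun hr _ => ?_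
  rw [joint]
  ring

theorem sum_joint_outcome (hl : Hl) (hr : Hr) (cl : Cl) (cr : Cr) (al : Al) (ar : Ar) :
    ∑ yl, ∑ yr, M.joint hl hr cl cr al ar yl yr =
      (M.left.latent hl * M.left.covariate cl hl * M.left.decision al (cl, cr) hl) *
        (M.right.latent hr * M.right.covariate cr hr * M.right.decision ar (cl, cr) hr) := by
  simp only [joint, ← mul_sum, M.sum_outcome]
  ring

theorem sum_joint_decisions_outcome (hl : Hl) (hr : Hr) (cl : Cl) (cr : Cr) :
    ∑ al, ∑ ar, ∑ yl, ∑ yr, M.joint hl hr cl cr al ar yl yr =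
      (M.left.latent hl * M.left.covariate cl hl) *
        (M.right.latent hr * M.right.covariate cr hr) := by
  simp only [sum_joint_outcome, ← mul_sum, ← sum_mul, M.left.sum_decision, M.right.sum_decision,
    mul_one]

theorem decisionsProb_eq (cl : Cl) (cr : Cr) (al : Al) (ar : Ar) :
    M.decisionsProb cl cr al ar =
      M.left.covariateDecisionProb cl (cl, cr) al *
        M.right.covariateDecisionProb cr (cl, cr) ar := by
  simp only [decisionsProb, sum_joint_outcome, ← sum_mul_sum, CandidateModel.covariateDecisionProb]

theorem leftDecisionProb_eq (cl : Cl) (cr : Cr) (al : Al) :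
    M.leftDecisionProb cl cr al =
      M.left.covariateDecisionProb cl (cl, cr) al * M.right.covariateProb cr := by
  simp only [leftDecisionProb, sum_joint_outcome, ← mul_sum, M.right.sum_decision, mul_one,
    ← sum_mul, CandidateModel.covariateDecisionProb, CandidateModel.covariateProb]

theorem rightDecisionProb_eq (cl : Cl) (cr : Cr) (ar : Ar) :
    M.rightDecisionProb cl cr ar =
      M.left.covariateProb cl * M.right.covariateDecisionProb cr (cl, cr) ar := by
  simp only [rightDecisionProb, sum_joint_outcome, ← sum_mul, ← mul_sum, M.left.sum_decision,
    mul_one, CandidateModel.covariateDecisionProb, CandidateModel.covariateProb]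

theorem covariatesProb_eq (cl : Cl) (cr : Cr) :
    M.covariatesProb cl cr = M.left.covariateProb cl * M.right.covariateProb cr := by
  simp only [covariatesProb, sum_joint_decisions_outcome, ← sum_mul_sum,
    CandidateModel.covariateProb]

theorem leftCovariateProb_eq (cl : Cl) :
    M.leftCovariateProb cl = M.left.covariateProb cl := by
  simp only [leftCovariateProb, sum_joint_decisions_outcome, ← mul_sum, M.right.sum_covariate,
    mul_one, M.right.sum_latent, CandidateModel.covariateProb]

theorem rightCovariateProb_eq (cr : Cr) :
    M.rightCovariateProb cr = M.right.covariateProb cr := by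
  simp only [rightCovariateProb, sum_joint_decisions_outcome, ← sum_mul, ← mul_sum,
    M.left.sum_covariate, mul_one, M.left.sum_latent, one_mul, CandidateModel.covariateProb]

end CommSemiring

section Semifield

variable [Semifield K] [PartialOrder K] [IsOrderedRing K]
  (M : ElectionModel K Hl Hr Cl Cr Al Ar Yl Yr)

theorem sum_truncated_eq_condProb_mul {cl : Cl} {cr : Cr} {al : Al}
    (overlap : M.covariatesProb cl cr ≠ 0 → M.leftDecisionProb cl cr al ≠ 0)
    (ar : Ar) (yl : Yl) (yr : Yr) :
    ∑ hl, ∑ hr, M.truncated hl hr cl cr al ar yl yr =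
      M.observedProb cl cr al ar yl yr / M.decisionsProb cl cr al ar *
        (M.rightDecisionProb cl cr ar / M.covariatesProb cl cr) *
        M.leftCovariateProb cl * M.rightCovariateProb cr := by
  rw [covariatesProb_eq, leftDecisionProb_eq] at overlap
  rw [sum_truncated, observedProb_eq, decisionsProb_eq, rightDecisionProb_eq, covariatesProb_eq,
    leftCovariateProb_eq, rightCovariateProb_eq]
  by_cases hR : M.right.covariateDecisionProb cr (cl, cr) ar = 0
  · simp [hR]
  have hR₀ : M.right.covariateProb cr ≠ 0 := fun h =>
    hR (M.right.covariateDecisionProb_eq_zero h _ _)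
  by_cases hL₀ : M.left.covariateProb cl = 0
  · simp [hL₀]
  have hL : M.left.covariateDecisionProb cl (cl, cr) al ≠ 0 :=
    left_ne_zero_of_mul (overlap (mul_ne_zero hL₀ hR₀))
  field_simp

end Semifield

end ElectionModel

theorem policy_intervention_identification_general
    {K Hl Hr Cl Cr Al Ar Yl Yr : Type*} [Semifield K] [PartialOrder K] [IsOrderedRing K]
    [Fintype Hl] [Fintype Hr] [Fintype Cl] [Fintype Cr]
    [Fintype Al] [Fintype Ar] [Fintype Yl] [Fintype Yr]
    (M : ElectionModel K Hl Hr Cl Cr Al Ar Yl Yr) (f : Cl → Cr → Al)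
    (overlap : ∀ cl cr, M.covariatesProb cl cr ≠ 0 → M.leftDecisionProb cl cr (f cl cr) ≠ 0)
    (yl : Yl) :
    ∑ hl, ∑ hr, ∑ cl, ∑ cr, ∑ ar, ∑ yr, M.truncated hl hr cl cr (f cl cr) ar yl yr =
      ∑ cl, ∑ cr, ∑ ar, ∑ yr,
        M.observedProb cl cr (f cl cr) ar yl yr / M.decisionsProb cl cr (f cl cr) ar *
          (M.rightDecisionProb cl cr ar / M.covariatesProb cl cr) *
          M.leftCovariateProb cl * M.rightCovariateProb cr := by
  rw [sum_pair_comm_four]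
  simp only [M.sum_truncated_eq_condProb_mul (overlap _ _)]

/-- policy-intervention identification in the two-candidate
segregated-graph model: if the joint pmf factorizes as
`p = p_{H_l}(h_l)·p_{H_r}(h_r)·p_{C_l}(c_l|h_l)·p_{C_r}(c_r|h_r)·
p_{A_l}(a_l|c_l,c_r,h_l)·p_{A_r}(a_r|c_l,c_r,h_r)·p_Y(y_l,y_r|c_l,c_r,a_l,a_r)`
with strictly positive factors, each a pmf in its leading argument(s), and
`f : C_l × C_r → A_l` is any deterministic treatment policy, then for every `y_l` the
interventional probability (summing the truncated factorization `p_f`, with the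
`p_{A_l}` factor deleted and `A_l = f(c_l,c_r)`, over all other variables) equals
`Σ_{c_l,c_r,a_r,y_r} P(Y_l=y_l,Y_r=y_r|C_l=c_l,C_r=c_r,A_r=a_r,A_l=f(c_l,c_r)) ·
P(A_r=a_r|C_l=c_l,C_r=c_r) · P(C_l=c_l) · P(C_r=c_r)`, with all probabilities computed
from the observed joint `p`. -/
theorem policy_intervention_identification
    {Hl Hr Cl Cr Al Ar Yl Yr : Type}
    [Fintype Hl] [Fintype Hr] [Fintype Cl] [Fintype Cr]
    [Fintype Al] [Fintype Ar] [Fintype Yl] [Fintype Yr]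
    [Nonempty Hl] [Nonempty Hr] [Nonempty Cl] [Nonempty Cr]
    [Nonempty Al] [Nonempty Ar] [Nonempty Yl] [Nonempty Yr]
    (pHl : Hl → ℝ) (pHr : Hr → ℝ) (pCl : Cl → Hl → ℝ) (pCr : Cr → Hr → ℝ)
    (pAl : Al → Cl → Cr → Hl → ℝ) (pAr : Ar → Cl → Cr → Hr → ℝ)
    (pY : Yl → Yr → Cl → Cr → Al → Ar → ℝ)
    (p : Hl → Hr → Cl → Cr → Al → Ar → Yl → Yr → ℝ)
    (hp : ∀ hl hr cl cr al ar yl yr,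
      p hl hr cl cr al ar yl yr =
        pHl hl * pHr hr * pCl cl hl * pCr cr hr * pAl al cl cr hl *
          pAr ar cl cr hr * pY yl yr cl cr al ar)
    (hHlpos : ∀ hl, 0 < pHl hl) (hHrpos : ∀ hr, 0 < pHr hr)
    (hClpos : ∀ cl hl, 0 < pCl cl hl) (hCrpos : ∀ cr hr, 0 < pCr cr hr)
    (hAlpos : ∀ al cl cr hl, 0 < pAl al cl cr hl)
    (hArpos : ∀ ar cl cr hr, 0 < pAr ar cl cr hr)
    (hYpos : ∀ yl yr cl cr al ar, 0 < pY yl yr cl cr al ar)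
    (hHlsum : ∑ hl, pHl hl = 1) (hHrsum : ∑ hr, pHr hr = 1)
    (hClsum : ∀ hl, ∑ cl, pCl cl hl = 1) (hCrsum : ∀ hr, ∑ cr, pCr cr hr = 1)
    (hAlsum : ∀ cl cr hl, ∑ al, pAl al cl cr hl = 1)
    (hArsum : ∀ cl cr hr, ∑ ar, pAr ar cl cr hr = 1)
    (hYsum : ∀ cl cr al ar, ∑ yl, ∑ yr, pY yl yr cl cr al ar = 1)
    (f : Cl → Cr → Al) :
    ∀ yl : Yl,
      (∑ hl, ∑ hr, ∑ cl, ∑ cr, ∑ ar, ∑ yr,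
          pHl hl * pHr hr * pCl cl hl * pCr cr hr * pAr ar cl cr hr *
            pY yl yr cl cr (f cl cr) ar) =
        ∑ cl, ∑ cr, ∑ ar, ∑ yr,
          -- P(Y_l = y_l, Y_r = y_r | C_l = c_l, C_r = c_r, A_r = a_r, A_l = f(c_l,c_r))
          ((∑ hl, ∑ hr, p hl hr cl cr (f cl cr) ar yl yr) /
              (∑ hl, ∑ hr, ∑ yl', ∑ yr', p hl hr cl cr (f cl cr) ar yl' yr')) *
            -- P(A_r = a_r | C_l = c_l, C_r = c_r)
            ((∑ hl, ∑ hr, ∑ al, ∑ yl', ∑ yr', p hl hr cl cr al ar yl' yr') /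
              (∑ hl, ∑ hr, ∑ al, ∑ ar', ∑ yl', ∑ yr', p hl hr cl cr al ar' yl' yr')) *
            -- P(C_l = c_l)
            (∑ hl, ∑ hr, ∑ cr', ∑ al, ∑ ar', ∑ yl', ∑ yr',
              p hl hr cl cr' al ar' yl' yr') *
            -- P(C_r = c_r)
            (∑ hl, ∑ hr, ∑ cl', ∑ al, ∑ ar', ∑ yl', ∑ yr',
              p hl hr cl' cr al ar' yl' yr') := by
  intro yl
  let left : CandidateModel ℝ Hl Cl (Cl × Cr) Al :=
    { latent := pHl, covariate := pCl, decision := fun al c => pAl al c.1 c.2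
      latent_nonneg := fun _ => (hHlpos _).le
      covariate_nonneg := fun _ _ => (hClpos _ _).le
      decision_nonneg := fun _ _ _ => (hAlpos _ _ _ _).le
      sum_latent := hHlsum, sum_covariate := hClsum, sum_decision := fun _ => hAlsum _ _ }
  let right : CandidateModel ℝ Hr Cr (Cl × Cr) Ar :=
    { latent := pHr, covariate := pCr, decision := fun ar c => pAr ar c.1 c.2
      latent_nonneg := fun _ => (hHrpos _).le
      covariate_nonneg := fun _ _ => (hCrpos _ _).le
      decision_nonneg := fun _ _ _ => (hArpos _ _ _ _).le
      sum_latent := hHrsum, sum_covariate := hCrsum, sum_decision := fun _ => hArsum _ _ }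
  let M : ElectionModel ℝ Hl Hr Cl Cr Al Ar Yl Yr :=
    ⟨left, right, pY, fun _ _ _ _ _ _ => (hYpos _ _ _ _ _ _).le, hYsum⟩
  obtain rfl : p = M.joint := by
    funext hl hr cl cr al ar yl yr
    exact hp hl hr cl cr al ar yl yr
  refine policy_intervention_identification_general M f (fun cl cr _ => ?_) yl
  rw [M.leftDecisionProb_eq]
  exact (mul_pos (left.covariateDecisionProb_pos hHlpos (hClpos cl) (hAlpos _ cl cr))
    (right.covariateProb_pos hHrpos (hCrpos cr))).ne'
end
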